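/- arXiv:2504.20888 — 2 statements merged into one kernel-verified Lean document; each statement's English description precedes it below -/
import Mathlib

section
/- Let L, M, N be positive real numbers, let δ be a real number with 0 < δ ≤ 1, and let t be a positive integer satisfying t ≤ 1/δ < t + 1. Then M·(t·L − (t(t+1)/2)·δ·L) + N·δ·L ≥ (√(2MN) − M/2)·L. -/
/-!
With `x = t * δ`, the hypotheses on `t` say `x ≤ 1 < x + δ`, so `(1 - x) * (x + δ - 1) ≥ 0`.
Dividing by `2 * δ`, this is `t - t * (t + 1) / 2 * δ ≥ 1 / (2 * δ) - 1 / 2`. The claim then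
follows from the AM–GM inequality `M / (2 * δ) + N * δ ≥ √(2 * M * N)`.
-/

theorem stmt4 (L M N δ : ℝ) (hL : 0 < L) (hM : 0 < M) (hN : 0 < N)
    (hδ0 : 0 < δ) (hδ1 : δ ≤ 1) (t : ℕ) (ht : 0 < t)
    (htδ : (t : ℝ) ≤ 1 / δ) (htδ' : 1 / δ < t + 1) :
    (Real.sqrt (2 * M * N) - M / 2) * L ≤
      M * ((t : ℝ) * L - ((t : ℝ) * (t + 1) / 2) * δ * L) + N * δ * L := by
  have h1 : (t : ℝ) * δ ≤ 1 := (le_div_iff₀ hδ0).mp htδ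
  have h2 : 1 < ((t : ℝ) + 1) * δ := (div_lt_iff₀ hδ0).mp htδ'
  have key : 1 / (2 * δ) - 1 / 2 ≤ (t : ℝ) - (t : ℝ) * (t + 1) / 2 * δ := by
    have h3 : 0 ≤ (1 - t * δ) * ((t + 1) * δ - 1) / (2 * δ) :=
      div_nonneg (mul_nonneg (by linarith) (by linarith)) (by linarith)
    have h4 : (1 - t * δ) * ((t + 1) * δ - 1) / (2 * δ)
        = ((t : ℝ) - (t : ℝ) * (t + 1) / 2 * δ) - (1 / (2 * δ) - 1 / 2) := by
      field_simp
      ring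
    linarith
  have amgm : Real.sqrt (2 * M * N) ≤ M * (1 / (2 * δ)) + N * δ := by
    apply Real.sqrt_le_iff.mpr
    refine ⟨by positivity, ?_⟩
    have h5 : M * (1 / (2 * δ)) * (N * δ) = M * N / 2 := by
      field_simp
    nlinarith [sq_nonneg (M * (1 / (2 * δ)) - N * δ)]
  have h6 := mul_le_mul_of_nonneg_left key hM.le
  have h7 : Real.sqrt (2 * M * N) - M / 2
      ≤ M * ((t : ℝ) - (t : ℝ) * (t + 1) / 2 * δ) + N * δ := by
    linarith
  calc _ ≤ (M * ((t : ℝ) - (t : ℝ) * (t + 1) / 2 * δ) + N * δ) * L :=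
        mul_le_mul_of_nonneg_right h7 hL.le
    _ = _ := by ring
end

section
/- Let N be a positive integer and let f be a function assigning to each ordered pair (j, ℓ) of elements of {1,…,N} an element of 𝔽₂, with f symmetric: f(j,ℓ) = f(ℓ,j) for all j, ℓ. Let i, i' be distinct elements of {1,…,N} and let P ⊆ {1,…,N} satisfy i ∈ P and i' ∉ P. Then, in 𝔽₂, Σ_{ℓ ∈ ({i'} ∪ P) ∖ {i}} f(i,ℓ) + Σ_{j ∈ P∖{i}} Σ_{ℓ ∈ P∖{j}} f(j,ℓ) = f(i,i'). -/
/-- The sum of a symmetric function over the ordered off-diagonal pairs of `P` vanishes in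
characteristic two: the swap `(j, ℓ) ↦ (ℓ, j)` is a fixed-point-free involution, so the terms
cancel in pairs. -/
lemma sum_offDiag_symm_eq_zero {α : Type*} [DecidableEq α] (f : α → α → ZMod 2)
    (hf : ∀ j ℓ, f j ℓ = f ℓ j) (P : Finset α) :
    ∑ j ∈ P, ∑ ℓ ∈ P.erase j, f j ℓ = 0 := by
  rw [Finset.sum_sigma']
  refine Finset.sum_involution (fun x _ => ⟨x.2, x.1⟩) ?_ ?_ ?_ ?_
  · rintro ⟨j, l⟩ _
    simp only [hf l j]
    exact CharTwo.add_self_eq_zero _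
  · rintro ⟨j, l⟩ h _ he
    simp only [Finset.mem_sigma, Finset.mem_erase] at h
    exact h.2.1 (congrArg Sigma.fst he)
  · rintro ⟨j, l⟩ h
    simp only [Finset.mem_sigma, Finset.mem_erase] at h ⊢
    exact ⟨h.2.2, h.2.1.symm, h.1⟩
  · rintro ⟨j, l⟩ _
    rfl

-- Splitting off the term `f i i'`, the rest is the sum over all ordered off-diagonal pairs of `P`.
theorem stmt7 (N : ℕ) (hN : 0 < N) (f : Fin N → Fin N → ZMod 2)
    (hf : ∀ j ℓ, f j ℓ = f ℓ j) (i i' : Fin N) (hii : i ≠ i')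
    (P : Finset (Fin N)) (hiP : i ∈ P) (hi'P : i' ∉ P) :
    (∑ ℓ ∈ (insert i' P).erase i, f i ℓ) +
        ∑ j ∈ P.erase i, ∑ ℓ ∈ P.erase j, f j ℓ = f i i' := by
  rw [Finset.erase_insert_of_ne hii.symm,
    Finset.sum_insert (fun h => hi'P (Finset.mem_of_mem_erase h)), add_assoc,
    Finset.add_sum_erase P (fun j => ∑ ℓ ∈ P.erase j, f j ℓ) hiP,
    sum_offDiag_symm_eq_zero f hf P, add_zero]
end
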